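/- arXiv:1302.6298 — 2 statements merged into one kernel-verified Lean document; each statement's English description precedes it below -/
import Mathlib

section
/- In U = U_q⁺(A₂), write B(a,b,c) = b₁^a b₂^b b₃^c for a,b,c ∈ ℕ, with the convention that any term B(a',b',c') having a negative index is read as 0 (its scalar coefficient then vanishes). Then: B(a,b,c)·e₁ = B(a,b,c+1); B(a,b,c)·e₂ = q^{c−b} B(a+1,b,c) + [c]₁ B(a,b+1,c−1); e₁·B(a,b,c) = q^{a−b} B(a,b,c+1) + [a]₁ B(a−1,b+1,c); and e₂·B(a,b,c) = B(a+1,b,c). -/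
noncomputable section

/-- The base field `K = ℚ(q)`, rational functions over `ℚ`. -/
abbrev K : Type := RatFunc ℚ

/-- The indeterminate `q`. -/
def q : K := RatFunc.X

/-- The `q`-integer `[m]₁ = (q^m - q^{-m})/(q - q⁻¹)`. -/
def qint (n : ℕ) : K := (q ^ n - q⁻¹ ^ n) / (q - q⁻¹)

/-- Generators of the free algebra on two letters. -/
def g (i : Fin 2) : FreeAlgebra K (Fin 2) := FreeAlgebra.ι K i

/-- The `q`-Serre relations of type `A₂`. -/
inductive SerreA2 : FreeAlgebra K (Fin 2) → FreeAlgebra K (Fin 2) → Prop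
  | rel1 : SerreA2
      (g 0 * g 0 * g 1 - (q + q⁻¹) • (g 0 * g 1 * g 0) + g 1 * g 0 * g 0) 0
  | rel2 : SerreA2
      (g 1 * g 1 * g 0 - (q + q⁻¹) • (g 1 * g 0 * g 1) + g 0 * g 1 * g 1) 0

/-- `U_q⁺(A₂)`: the free algebra on `e₁, e₂` modulo the `q`-Serre relations. -/
abbrev UA2 : Type := RingQuot SerreA2

/-- The Chevalley generator `e₁`. -/
def e1 : UA2 := RingQuot.mkAlgHom K SerreA2 (g 0)

/-- The Chevalley generator `e₂`. -/
def e2 : UA2 := RingQuot.mkAlgHom K SerreA2 (g 1)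

/-- The root vector `b₁ = e₂`. -/
def b1 : UA2 := e2

/-- The root vector `b₂ = e₁e₂ − q e₂e₁`. -/
def b2 : UA2 := e1 * e2 - q • (e2 * e1)

/-- The root vector `b₃ = e₁`. -/
def b3 : UA2 := e1

/-- The PBW monomial `B(a,b,c) = b₁^a b₂^b b₃^c`. -/
def Bmon (a b c : ℕ) : UA2 := b1 ^ a * b2 ^ b * b3 ^ c

theorem q_ne : q ≠ 0 := RatFunc.X_ne_zero

theorem q_sub_ne : q - q⁻¹ ≠ 0 := by
  intro h
  have h1 : q * q = 1 := by
    have h2 : q = q⁻¹ := sub_eq_zero.mp h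
    calc q * q = q * q⁻¹ := by rw [← h2]
      _ = 1 := mul_inv_cancel₀ q_ne
  have h3 : (algebraMap (Polynomial ℚ) (RatFunc ℚ)) (Polynomial.X * Polynomial.X)
      = algebraMap (Polynomial ℚ) (RatFunc ℚ) 1 := by
    rw [map_mul, map_one, RatFunc.algebraMap_X]
    exact h1
  have h4 := RatFunc.algebraMap_injective ℚ h3
  have h5 := congrArg (Polynomial.eval 2) h4
  norm_num at h5

theorem qint_zero : qint 0 = 0 := by simp [qint]

theorem qint_succ (n : ℕ) : qint (n + 1) = q ^ n + q⁻¹ * qint n := by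
  have h := q_sub_ne
  unfold qint
  rw [eq_comm, eq_div_iff h, add_mul, mul_assoc, div_mul_cancel₀ _ h]
  ring

section abstractAlg
variable {A : Type*} [Ring A] [Algebra K A]

theorem comm_pow_right (x b : A) (r : K) (h : x * b = r • (b * x)) (n : ℕ) :
    x * b ^ n = r ^ n • (b ^ n * x) := by
  induction n with
  | zero => simp
  | succ n ih =>
    rw [pow_succ, ← mul_assoc, ih, smul_mul_assoc, mul_assoc, h, mul_smul_comm, smul_smul,
      pow_succ, mul_assoc]

theorem comm_pow_left (y b : A) (r : K) (h : b * y = r • (y * b)) (n : ℕ) :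
    b ^ n * y = r ^ n • (y * b ^ n) := by
  induction n with
  | zero => simp
  | succ n ih =>
    rw [pow_succ, mul_assoc, h, mul_smul_comm, ← mul_assoc, ih, smul_mul_assoc, smul_smul,
      pow_succ, mul_assoc, mul_comm r]

theorem xpow_y (x y b : A) (h1 : x * y = q • (y * x) + b) (h2 : x * b = q⁻¹ • (b * x)) (c : ℕ) :
    x ^ c * y = q ^ c • (y * x ^ c) + qint c • (b * x ^ (c - 1)) := by
  induction c with
  | zero => simp [qint_zero]
  | succ c ih =>
    have key : qint c • (x * (b * x ^ (c - 1))) = (q⁻¹ * qint c) • (b * x ^ c) := by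
      cases c with
      | zero => simp [qint_zero]
      | succ c =>
        rw [← mul_assoc, h2, Nat.add_sub_cancel, smul_mul_assoc, mul_assoc, ← pow_succ',
          smul_smul, mul_comm q⁻¹]
    rw [pow_succ', mul_assoc, ih, mul_add, mul_smul_comm, mul_smul_comm, key, ← mul_assoc, h1,
      qint_succ, Nat.add_sub_cancel, add_mul, smul_mul_assoc, mul_assoc, smul_add, smul_smul,
      add_smul, pow_succ q]
    abel

theorem x_ypow (x y b : A) (h1 : x * y = q • (y * x) + b) (h2 : b * y = q⁻¹ • (y * b)) (c : ℕ) :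
    x * y ^ c = q ^ c • (y ^ c * x) + qint c • (y ^ (c - 1) * b) := by
  induction c with
  | zero => simp [qint_zero]
  | succ c ih =>
    have key : qint c • (y ^ (c - 1) * b * y) = (q⁻¹ * qint c) • (y ^ c * b) := by
      cases c with
      | zero => simp [qint_zero]
      | succ c =>
        rw [mul_assoc, h2, Nat.add_sub_cancel, mul_smul_comm, ← mul_assoc, ← pow_succ,
          smul_smul, mul_comm q⁻¹]
    rw [pow_succ, ← mul_assoc, ih, add_mul, smul_mul_assoc, smul_mul_assoc, key, mul_assoc, h1,
      qint_succ, Nat.add_sub_cancel, mul_add, mul_smul_comm, ← mul_assoc, smul_add, smul_smul,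
      add_smul, pow_succ q]
    abel

theorem zpow_diff (a b : ℕ) : q ^ ((a : ℤ) - b) = q ^ a * q⁻¹ ^ b := by
  rw [zpow_sub₀ q_ne, zpow_natCast, zpow_natCast, inv_pow, div_eq_mul_inv]

theorem main_right (x y b : A) (h1 : x * y = q • (y * x) + b) (h2 : x * b = q⁻¹ • (b * x))
    (h3 : b * y = q⁻¹ • (y * b)) (i j k : ℕ) :
    y ^ i * b ^ j * x ^ k * y = (q ^ ((k : ℤ) - j)) • (y ^ (i + 1) * b ^ j * x ^ k)
      + qint k • (y ^ i * b ^ (j + 1) * x ^ (k - 1)) := by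
  have e : y ^ i * b ^ j * (y * x ^ k) = q⁻¹ ^ j • (y ^ (i + 1) * b ^ j * x ^ k) := by
    rw [← mul_assoc, mul_assoc (y ^ i), comm_pow_left y b _ h3, mul_smul_comm, smul_mul_assoc,
      ← mul_assoc, ← pow_succ]
  rw [mul_assoc _ (x ^ k) y, xpow_y x y b h1 h2, mul_add, mul_smul_comm, mul_smul_comm, e,
    smul_smul, zpow_diff, pow_succ b, mul_assoc (y ^ i) (b ^ j) (b * _), mul_assoc (y ^ i) _ (x ^ (k - 1)), mul_assoc (b ^ j)]

theorem main_left (x y b : A) (h1 : x * y = q • (y * x) + b) (h2 : x * b = q⁻¹ • (b * x))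
    (h3 : b * y = q⁻¹ • (y * b)) (i j k : ℕ) :
    x * (y ^ i * b ^ j * x ^ k) = (q ^ ((i : ℤ) - j)) • (y ^ i * b ^ j * x ^ (k + 1))
      + qint i • (y ^ (i - 1) * b ^ (j + 1) * x ^ k) := by
  have e : y ^ i * x * (b ^ j * x ^ k) = q⁻¹ ^ j • (y ^ i * b ^ j * x ^ (k + 1)) := by
    rw [mul_assoc, ← mul_assoc x, comm_pow_right x b _ h2, smul_mul_assoc, mul_smul_comm,
      mul_assoc (b ^ j), ← pow_succ', mul_assoc]
  rw [mul_assoc (y ^ i), ← mul_assoc x, x_ypow x y b h1 h3, add_mul, smul_mul_assoc,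
    smul_mul_assoc, e, smul_smul, zpow_diff, pow_succ' b]
  simp only [mul_assoc]

theorem rel_xb (x y : A) (h : x * x * y - (q + q⁻¹) • (x * y * x) + y * x * x = 0) :
    x * (x * y - q • (y * x)) = q⁻¹ • ((x * y - q • (y * x)) * x) := by
  rw [mul_sub, sub_mul, mul_smul_comm, smul_mul_assoc, smul_sub, smul_smul,
    inv_mul_cancel₀ q_ne, one_smul, ← sub_eq_zero, ← h, add_smul]
  simp only [mul_assoc]
  abel

theorem rel_by (x y : A) (h : y * y * x - (q + q⁻¹) • (y * x * y) + x * y * y = 0) :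
    (x * y - q • (y * x)) * y = q⁻¹ • (y * (x * y - q • (y * x))) := by
  rw [mul_sub, sub_mul, mul_smul_comm, smul_mul_assoc, smul_sub, smul_smul,
    inv_mul_cancel₀ q_ne, one_smul, ← sub_eq_zero, ← h, add_smul]
  simp only [mul_assoc]
  abel

end abstractAlg

theorem serre1 : e1 * e1 * e2 - (q + q⁻¹) • (e1 * e2 * e1) + e2 * e1 * e1 = 0 := by
  have h := RingQuot.mkAlgHom_rel K SerreA2.rel1
  simp only [map_add, map_sub, map_mul, map_smul, map_zero] at h
  exact h

theorem serre2 : e2 * e2 * e1 - (q + q⁻¹) • (e2 * e1 * e2) + e1 * e2 * e2 = 0 := by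
  have h := RingQuot.mkAlgHom_rel K SerreA2.rel2
  simp only [map_add, map_sub, map_mul, map_smul, map_zero] at h
  exact h

/-- multiplication of PBW monomials of `U_q⁺(A₂)` by the generators.
(Terms with a negative index appear with vanishing coefficient, so truncated
subtraction on `ℕ` realizes the stated convention.) -/
theorem statement6 (a b c : ℕ) :
    Bmon a b c * e1 = Bmon a b (c + 1) ∧
    Bmon a b c * e2
      = (q ^ ((c : ℤ) - b)) • Bmon (a + 1) b c + qint c • Bmon a (b + 1) (c - 1) ∧
    e1 * Bmon a b c
      = (q ^ ((a : ℤ) - b)) • Bmon a b (c + 1) + qint a • Bmon (a - 1) (b + 1) c ∧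
    e2 * Bmon a b c = Bmon (a + 1) b c := by
  have h1 : e1 * e2 = q • (e2 * e1) + b2 := by
    unfold b2
    exact (add_sub_cancel _ _).symm
  have h2 : e1 * b2 = q⁻¹ • (b2 * e1) := rel_xb e1 e2 serre1
  have h3 : b2 * e2 = q⁻¹ • (e2 * b2) := rel_by e1 e2 serre2
  refine ⟨?_, main_right e1 e2 b2 h1 h2 h3 a b c, main_left e1 e2 b2 h1 h2 h3 a b c, ?_⟩
  · unfold Bmon b3
    rw [mul_assoc, ← pow_succ]
  · unfold Bmon b1
    rw [← mul_assoc, ← mul_assoc, ← pow_succ']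
end
end

section
/- Let M⁽¹⁾, M⁽²⁾, M⁽³⁾ be the 3×3 matrices over End(F ⊗ F ⊗ F) given by: M⁽¹⁾ has entries of the 3×3 matrix [[a⁻, k, 0], [−q k, a⁺, 0], [0, 0, 1]] placed in the first tensor factor (identity in the others); M⁽²⁾ has entries of [[1, 0, 0], [0, a⁻, k], [0, −q k, a⁺]] placed in the second tensor factor; M⁽³⁾ has entries of [[a⁻, k, 0], [−q k, a⁺, 0], [0, 0, 1]] placed in the third tensor factor. Let M = M⁽¹⁾M⁽²⁾M⁽³⁾ (matrix product over the noncommutative ring End(F⊗F⊗F)). Then: M₁₃ = k⊗k⊗1; M₂₃ = a⁺⊗k⊗1; M₁₂M₂₃ − q M₂₂M₁₃ = 1⊗k⊗k; and M₁₂M₃₃ − q M₃₂M₁₃ = a⁻⊗a⁺⊗k + k⊗1⊗a⁺. (These are the images π_{121}(σ₁), π_{121}(σ₁e₁), π_{121}(σ₂), π_{121}(σ₂e₂) of the distinguished elements σ₁ = t₁₃, σ₁e₁ = t₂₃, σ₂ = t₁₂t₂₃ − q t₂₂t₁₃, σ₂e₂ = t₁₂t₃₃ − q t₃₂t₁₃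 of A_q(A₂) under the tensor product of fundamental representations.) -/
noncomputable section

/-- The Fock space `F` with basis `|m⟩, m ∈ ℕ`. -/
abbrev F : Type := ℕ →₀ K

/-- The basis vector `|m⟩`. -/
def ket (m : ℕ) : F := Finsupp.single m 1

/-- The operator `k : |m⟩ ↦ q^m |m⟩`. -/
def opK : Module.End K F := Finsupp.lift F K ℕ fun m => (q ^ m) • ket m

/-- The operator `a⁺ : |m⟩ ↦ |m+1⟩`. -/
def opAp : Module.End K F := Finsupp.lift F K ℕ fun m => ket (m + 1)

/-- The operator `a⁻ : |m⟩ ↦ (1 - q^{2m}) |m-1⟩` (so `a⁻|0⟩ = 0`). -/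
def opAm : Module.End K F := Finsupp.lift F K ℕ fun m => (1 - q ^ (2 * m)) • ket (m - 1)

open TensorProduct

/-- The triple tensor product `F ⊗ F ⊗ F`. -/
abbrev T3 : Type := F ⊗[K] (F ⊗[K] F)

instance : AddCommGroup T3 := by
  exact @TensorProduct.addCommGroup K _ F (F ⊗[K] F) _ _ _ _

/-- `f ⊗ g ⊗ h` as an operator on `F ⊗ F ⊗ F`. -/
def tens3 (f g h : Module.End K F) : Module.End K T3 :=
  TensorProduct.map f (TensorProduct.map g h)

/-- The matrix `M⁽¹⁾` : the fundamental representation `π₁` placed in the first tensor factor. -/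
def M1 : Matrix (Fin 3) (Fin 3) (Module.End K T3) :=
  !![tens3 opAm 1 1, tens3 opK 1 1, 0;
     (-q) • tens3 opK 1 1, tens3 opAp 1 1, 0;
     0, 0, 1]

/-- The matrix `M⁽²⁾` : the fundamental representation `π₂` placed in the second tensor factor. -/
def M2 : Matrix (Fin 3) (Fin 3) (Module.End K T3) :=
  !![1, 0, 0;
     0, tens3 1 opAm 1, tens3 1 opK 1;
     0, (-q) • tens3 1 opK 1, tens3 1 opAp 1]

/-- The matrix `M⁽³⁾` : the fundamental representation `π₁` placed in the third tensor factor. -/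
def M3 : Matrix (Fin 3) (Fin 3) (Module.End K T3) :=
  !![tens3 1 1 opAm, tens3 1 1 opK, 0;
     (-q) • tens3 1 1 opK, tens3 1 1 opAp, 0;
     0, 0, 1]

/-- The product matrix `M = M⁽¹⁾M⁽²⁾M⁽³⁾`, i.e. `π₁₂₁(T)`. -/
def M : Matrix (Fin 3) (Fin 3) (Module.End K T3) := M1 * M2 * M3

theorem aux1 {R V : Type*} [CommRing R] [AddCommGroup V] [Module R V] (c : R) (x y z : V) :
    x + -(c * c) • y + c • z - c • (-c • y + z) = x := by
  module

theorem aux2 {R V : Type*} [CommRing R] [AddCommGroup V] [Module R V] (c : R) (x y z : V) :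
    x + (y + -(c * c) • z) - c • -c • z = x + y := by
  module

theorem tens3_mul (f g h f' g' h' : Module.End K F) :
    tens3 f g h * tens3 f' g' h' = tens3 (f * f') (g * g') (h * h') := by
  unfold tens3
  rw [TensorProduct.map_mul, TensorProduct.map_mul]

theorem tens3_smul_left (c : K) (f g h : Module.End K F) :
    tens3 (c • f) g h = c • tens3 f g h := by
  unfold tens3
  rw [TensorProduct.map_smul_left]

theorem tens3_smul_mid (c : K) (f g h : Module.End K F) :
    tens3 f (c • g) h = c • tens3 f g h := by
  unfold tens3
  rw [TensorProduct.map_smul_left, TensorProduct.map_smul_right]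

theorem tens3_add_left (f f' g h : Module.End K F) :
    tens3 (f + f') g h = tens3 f g h + tens3 f' g h := by
  unfold tens3
  rw [TensorProduct.map_add_left]

theorem tens3_add_mid (f g g' h : Module.End K F) :
    tens3 f (g + g') h = tens3 f g h + tens3 f g' h := by
  unfold tens3
  rw [TensorProduct.map_add_left, TensorProduct.map_add_right]

theorem opK_ket (m : ℕ) : opK (ket m) = q ^ m • ket m := by
  unfold opK
  rw [ket, Finsupp.lift_apply]
  rw [Finsupp.sum_single_index]
  · rw [one_smul, ket]
  · exact zero_smul K _

theorem opAp_ket (m : ℕ) : opAp (ket m) = ket (m + 1) := by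
  simp [opAp, ket]

theorem opAm_ket (m : ℕ) : opAm (ket m) = (1 - q ^ (2 * m)) • ket (m - 1) := by
  simp [opAm, ket]

theorem end_ext (f g : Module.End K F) (h : ∀ m, f (ket m) = g (ket m)) : f = g := by
  apply Finsupp.lhom_ext'
  intro m
  apply LinearMap.ext_ring
  exact h m

theorem opK_mul_opAp : opK * opAp = q • (opAp * opK) := by
  apply end_ext
  intro m
  simp only [Module.End.mul_apply, LinearMap.smul_apply, opK_ket, opAp_ket, map_smul, smul_smul]
  rw [pow_succ']

theorem opAm_mul_opAp : opAm * opAp = 1 + (-(q * q)) • (opK * opK) := by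
  apply end_ext
  intro m
  simp only [Module.End.mul_apply, LinearMap.add_apply, LinearMap.smul_apply, opK_ket, opAp_ket,
    opAm_ket, map_smul, smul_smul, Module.End.one_apply, Nat.add_sub_cancel]
  nth_rewrite 2 [← one_smul K (ket m)]
  rw [← add_smul]
  congr 1
  ring

theorem M02 : M 0 2 = tens3 opK opK 1 := by
  simp [M, M1, M2, M3, Matrix.mul_apply, Fin.sum_univ_three, tens3_mul]

theorem M12 : M 1 2 = tens3 opAp opK 1 := by
  simp [M, M1, M2, M3, Matrix.mul_apply, Fin.sum_univ_three, tens3_mul]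

theorem M01 : M 0 1 = tens3 opAm 1 opK + tens3 opK opAm opAp := by
  simp [M, M1, M2, M3, Matrix.mul_apply, Fin.sum_univ_three, tens3_mul]

theorem M11 : M 1 1 = (-q) • tens3 opK 1 opK + tens3 opAp opAm opAp := by
  simp [M, M1, M2, M3, Matrix.mul_apply, Fin.sum_univ_three, tens3_mul]
  exact (neg_smul _ _).symm

theorem M21 : M 2 1 = (-q) • tens3 1 opK opAp := by
  simp [M, M1, M2, M3, Matrix.mul_apply, Fin.sum_univ_three, tens3_mul]
  exact (neg_smul _ _).symm

theorem M22 : M 2 2 = tens3 1 opAp 1 := by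
  simp [M, M1, M2, M3, Matrix.mul_apply, Fin.sum_univ_three, tens3_mul]

/-- the images of `σ₁ = t₁₃`, `σ₁e₁ = t₂₃`, `σ₂ = t₁₂t₂₃ − q t₂₂t₁₃`,
`σ₂e₂ = t₁₂t₃₃ − q t₃₂t₁₃` under `π₁₂₁` (matrix indices here are `0`-based). -/
theorem statement8 :
    M 0 2 = tens3 opK opK 1 ∧
    M 1 2 = tens3 opAp opK 1 ∧
    M 0 1 * M 1 2 - q • (M 1 1 * M 0 2) = tens3 1 opK opK ∧
    M 0 1 * M 2 2 - q • (M 2 1 * M 0 2)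
      = tens3 opAm opAp opK + tens3 opK 1 opAp := by
  refine ⟨M02, M12, ?_, ?_⟩
  · rw [M01, M12, M11, M02]
    simp only [add_mul, smul_mul_assoc, tens3_mul, one_mul, mul_one, opK_mul_opAp, opAm_mul_opAp,
      tens3_add_left, tens3_smul_left]
    exact aux1 q _ _ _
  · rw [M01, M22, M21, M02]
    simp only [add_mul, smul_mul_assoc, tens3_mul, one_mul, mul_one, opAm_mul_opAp,
      tens3_add_mid, tens3_smul_mid]
    exact aux2 q _ _ _
end
end
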